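/- arXiv:1811.08463 — 8 statements merged into one kernel-verified Lean document; each statement's English description precedes it below -/
import Mathlib

section
/- Let E be a complex Banach space with open unit ball B_E. If (f_α) and (g_α) are nets of holomorphic maps from B_E to E with f_α(B_E) ⊆ B_E and g_α(B_E) ⊆ B_E, and f, g are holomorphic maps from B_E to E with f(B_E) ⊆ B_E and g(B_E) ⊆ B_E, such that f_α → f and g_α → g uniformly on every compact subset of B_E, then f_α ∘ g_α → f ∘ g uniformly on every compact subset of B_E. (That is, the composition operation is continuous on H(B_E,B_E) for the compact-open topology τ0.) -/
/-!
The set `L = g(K)` is a compact subset of the ball, so some `δ`-neighbourhood of `L` stays inside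
the ball. The Schwarz lemma on the balls of radius `δ` centred at points of `L`, applied to the
self-maps `F α`, gives a Lipschitz estimate at those points whose constant `2 / δ` does not depend
on `α`. Hence the decomposition
`F α (G α x) - f (g x) = (F α (G α x) - F α (g x)) + (F α (g x) - f (g x))`
has a first term controlled by the uniform convergence of `G` on `K`, and a second one controlled by
the uniform convergence of `F` on `L`.
-/

open Filter Metric Set

/-- A Lipschitz estimate at `z`, uniform over all holomorphic self-maps `h` of the unit ball: such
an `h` sends `ball z δ` into the closed ball of radius `2`, the diameter of the unit ball,
around `h z`. -/
theorem dist_le_of_selfMap {E : Type*} [NormedAddCommGroup E] [NormedSpace ℂ E]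
    {h : E → E} (hd : DifferentiableOn ℂ h (ball (0 : E) 1))
    (hm : MapsTo h (ball (0 : E) 1) (ball (0 : E) 1)) {z w : E} {δ : ℝ}
    (hδ : ball z δ ⊆ ball (0 : E) 1) (hw : w ∈ ball z δ) :
    dist (h w) (h z) ≤ 2 / δ * dist w z := by
  have hz : z ∈ ball z δ := mem_ball_self (pos_of_mem_ball hw)
  refine Complex.dist_le_div_mul_dist_of_mapsTo_ball (hd.mono hδ) (fun u hu => ?_) hw
  have h1 := mem_ball.mp (hm (hδ hu))
  have h2 := mem_ball.mp (hm (hδ hz))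
  have h3 := dist_triangle_right (h u) (h z) 0
  exact mem_closedBall.mpr (by linarith)

/-- **Continuity of composition on `H(B_E, B_E)` for the compact-open topology.**
If nets `(F α)` and `(G α)` of holomorphic self-maps of the open unit ball of a complex
Banach space `E` converge to holomorphic self-maps `f` and `g` uniformly on every compact
subset of the ball, then `(F α) ∘ (G α)` converges to `f ∘ g` uniformly on every compact
subset of the ball. -/
theorem composition_continuous_tau0
    {E : Type*} [NormedAddCommGroup E] [NormedSpace ℂ E] [CompleteSpace E]
    {ι : Type*} [Nonempty ι] [Preorder ι] [IsDirected ι (· ≤ ·)]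
    (F G : ι → E → E) (f g : E → E)
    (hF : ∀ α, DifferentiableOn ℂ (F α) (ball (0 : E) 1) ∧
      MapsTo (F α) (ball (0 : E) 1) (ball (0 : E) 1))
    (hG : ∀ α, DifferentiableOn ℂ (G α) (ball (0 : E) 1) ∧
      MapsTo (G α) (ball (0 : E) 1) (ball (0 : E) 1))
    (hf : DifferentiableOn ℂ f (ball (0 : E) 1) ∧
      MapsTo f (ball (0 : E) 1) (ball (0 : E) 1))
    (hg : DifferentiableOn ℂ g (ball (0 : E) 1) ∧
      MapsTo g (ball (0 : E) 1) (ball (0 : E) 1))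
    (hFconv : ∀ K : Set E, K ⊆ ball (0 : E) 1 → IsCompact K →
      TendstoUniformlyOn F f atTop K)
    (hGconv : ∀ K : Set E, K ⊆ ball (0 : E) 1 → IsCompact K →
      TendstoUniformlyOn G g atTop K) :
    ∀ K : Set E, K ⊆ ball (0 : E) 1 → IsCompact K →
      TendstoUniformlyOn (fun α => (F α) ∘ (G α)) (f ∘ g) atTop K := by
  intro K hK hKc
  have hLc : IsCompact (g '' K) := hKc.image_of_continuousOn (hg.1.continuousOn.mono hK)
  have hL : g '' K ⊆ ball (0 : E) 1 := (hg.2.mono_left hK).image_subset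
  obtain ⟨δ, hδ, hsub⟩ := hLc.exists_thickening_subset_open isOpen_ball hL
  rw [Metric.tendstoUniformlyOn_iff]
  intro ε hε
  -- `G α` must stay within `δ` of `g` for the Schwarz estimate to apply, and within `δ * ε / 4` for
  -- the constant `2 / δ` to turn its error into at most `ε / 2`.
  have hη : 0 < min δ (δ * ε / 4) := lt_min hδ (by positivity)
  filter_upwards [Metric.tendstoUniformlyOn_iff.mp (hGconv K hK hKc) _ hη,
    Metric.tendstoUniformlyOn_iff.mp (hFconv _ hL hLc) (ε / 2) (half_pos hε)] with α hGα hFα x hx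
  have hgx : g x ∈ g '' K := mem_image_of_mem g hx
  have hd : dist (G α x) (g x) < min δ (δ * ε / 4) := by
    rw [dist_comm]
    exact hGα x hx
  have h1 : dist (F α (G α x)) (F α (g x)) ≤ 2 / δ * dist (G α x) (g x) :=
    dist_le_of_selfMap (hF α).1 (hF α).2 ((ball_subset_thickening hgx δ).trans hsub)
      (mem_ball.mpr (hd.trans_le (min_le_left _ _)))
  have h2 : 2 / δ * dist (G α x) (g x) ≤ ε / 2 :=
    calc 2 / δ * dist (G α x) (g x) ≤ 2 / δ * (δ * ε / 4) := by
          gcongr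
          exact hd.le.trans (min_le_right _ _)
      _ = ε / 2 := by field_simp; norm_num
  have h3 := hFα (g x) hgx
  have h4 := dist_triangle_right (f (g x)) (F α (G α x)) (F α (g x))
  simp only [Function.comp_apply]
  linarith
end

section
/- Let E be an infinite-dimensional complex Banach space, and endow the space L(E) of continuous linear operators on E with the topology τ0 of uniform convergence on compact subsets of E. Then the composition map (T, S) ↦ T ∘ S from (L(E), τ0) × (L(E), τ0) to (L(E), τ0) is not continuous. -/
/-!
Fix a unit vector `e` and a functional `φ` with `φ e = 1`. Continuity at `(0, 0)` would give
compact sets `K₁`, `K₂` and radii `ε₁, ε₂ > 0` such that `‖T (S e)‖ < 1` as soon as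
`‖T‖ < ε₁` on `K₁` and `‖S‖ < ε₂` on `K₂`. A rank-one operator `S = φ ⊗ (c • y)` with `‖y‖ ≤ 1`
satisfies the second condition for a small constant `c > 0` that does not depend on `y`, and
`T = ψ ⊗ (c⁻¹ • e)` satisfies `T (S e) = e` as soon as `ψ y = 1`. So it suffices that `ψ` can be
made arbitrarily small on `K₁` while `ψ y = 1` for some `y` in the unit ball
(`exists_functional_small_on_compact`). This is where infinite dimension enters: `K₁` is close to
a finite set, whose span is a proper closed subspace, so it is annihilated by a nonzero functional.
-/

open Filter Metric Set

/-- In infinite dimension the polar of a compact set is unbounded: a continuous functional can be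
uniformly small on `K` and still take the value `1` on the unit ball. -/
lemma exists_functional_small_on_compact
    {E : Type*} [NormedAddCommGroup E] [NormedSpace ℂ E] (hinf : ¬ FiniteDimensional ℂ E)
    {K : Set E} (hK : IsCompact K) {δ : ℝ} (hδ : 0 < δ) :
    ∃ (ψ : E →L[ℂ] ℂ) (y : E), ‖y‖ ≤ 1 ∧ ψ y = 1 ∧ ∀ x ∈ K, ‖ψ x‖ ≤ δ := by
  obtain ⟨t, -, htf, htK⟩ := finite_cover_balls_of_compact hK (half_pos hδ)
  let F : Submodule ℂ E := Submodule.span ℂ t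
  have : FiniteDimensional ℂ F := FiniteDimensional.span_of_finite ℂ htf
  have : IsClosed (F : Set E) := F.closed_of_finiteDimensional
  have hF : ∃ v, v ∉ F := by
    by_contra! h
    have htop : F = ⊤ := by
      ext v
      simp [h v]
    exact hinf (Module.finite_def.2 (htop ▸ Submodule.fg_span htf))
  obtain ⟨v, hv⟩ := hF
  have hv' : F.mkQ v ≠ 0 := by simpa using hv
  obtain ⟨g, hg⟩ := SeparatingDual.exists_eq_one (R := ℂ) hv'
  let ψ : E →L[ℂ] ℂ := g.comp F.mkQL
  have hψF : ∀ a ∈ t, ψ a = 0 := by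
    intro a ha
    have h0 : F.mkQ a = 0 := by
      simpa using (Submodule.subset_span ha : a ∈ F)
    change g (F.mkQ a) = 0
    rw [h0, map_zero]
  have hψ : 0 < ‖ψ‖ := by
    refine norm_pos_iff.2 fun h => ?_
    have h1 : ψ v = 1 := hg
    simp [h] at h1
  obtain ⟨y, hy1, hy⟩ := ψ.exists_lt_apply_of_lt_opNorm (half_lt_self hψ)
  have hy0 : 0 < ‖ψ y‖ := (half_pos hψ).trans hy
  refine ⟨(ψ y)⁻¹ • ψ, y, hy1.le, ?_, fun x hx => ?_⟩
  · simp [norm_pos_iff.1 hy0]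
  · obtain ⟨a, ha, hxa⟩ := mem_iUnion₂.1 (htK hx)
    have h1 : ψ x = ψ (x - a) := by simp [hψF a ha]
    have h2 : ‖ψ x‖ ≤ ‖ψ‖ * (δ / 2) := by
      rw [h1]
      refine (ψ.le_opNorm _).trans (mul_le_mul_of_nonneg_left ?_ hψ.le)
      exact (mem_ball_iff_norm.1 hxa).le
    have h3 : ‖((ψ y)⁻¹ • ψ) x‖ = ‖ψ x‖ / ‖ψ y‖ := by
      simp [div_eq_inv_mul]
    rw [h3, div_le_iff₀ hy0]
    nlinarith

/-- The sets `{T | ∀ x ∈ K, ‖T x‖ < ε}` with `K` compact and `ε > 0` generate the `τ₀`-neighbourhoods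
of `0`. -/
lemma exists_compact_of_mem_nhds_zero_tau0
    {E : Type*} [NormedAddCommGroup E] [NormedSpace ℂ E] {U : Set (E →L[ℂ] E)}
    (hU : U ∈ @nhds _ (TopologicalSpace.induced
      (fun T : E →L[ℂ] E => (⟨⇑T, T.continuous⟩ : C(E, E))) ContinuousMap.compactOpen) 0) :
    ∃ (K : Set E) (ε : ℝ), IsCompact K ∧ 0 < ε ∧
      ∀ T : E →L[ℂ] E, (∀ x ∈ K, ‖T x‖ < ε) → T ∈ U := by
  rw [nhds_induced, mem_comap] at hU
  obtain ⟨V, hV, hVU⟩ := hU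
  obtain ⟨⟨K, ε⟩, ⟨hK, hε⟩, h⟩ := (nhds_basis_uniformity'
    (Metric.uniformity_basis_dist (α := E)).compactConvergenceUniformity).mem_iff.1 hV
  refine ⟨K, ε, hK, hε, fun T hT => hVU (h fun x hx => ?_)⟩
  simpa using hT x hx

/-- **(Bonet) Composition is not `τ₀`-continuous on `L(E)` for infinite-dimensional `E`.**
Endow `L(E) = E →L[ℂ] E` with the topology `τ₀` of uniform convergence on compact subsets
of `E`, realized here as the topology induced by the inclusion of `L(E)` into `C(E, E)`
with the compact-open topology.  Then the composition map `(T, S) ↦ T ∘ S` is not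
continuous from `(L(E), τ₀) × (L(E), τ₀)` to `(L(E), τ₀)`. -/
theorem composition_not_continuous_on_operators_tau0
    {E : Type*} [NormedAddCommGroup E] [NormedSpace ℂ E] [CompleteSpace E]
    (hinf : ¬ FiniteDimensional ℂ E) :
    letI τ : TopologicalSpace (E →L[ℂ] E) :=
      TopologicalSpace.induced (fun T : E →L[ℂ] E => (⟨⇑T, T.continuous⟩ : C(E, E)))
        ContinuousMap.compactOpen
    ¬ @Continuous ((E →L[ℂ] E) × (E →L[ℂ] E)) (E →L[ℂ] E)
        (@instTopologicalSpaceProd _ _ τ τ) τ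
        (fun p => p.1.comp p.2) := by
  intro hcont
  let τ : TopologicalSpace (E →L[ℂ] E) :=
    TopologicalSpace.induced (fun T : E →L[ℂ] E => (⟨⇑T, T.continuous⟩ : C(E, E)))
      ContinuousMap.compactOpen
  have : Nontrivial E := by
    by_contra h
    have := not_nontrivial_iff_subsingleton.1 h
    exact hinf inferInstance
  obtain ⟨e, he⟩ := exists_norm_eq E zero_le_one
  have he0 : e ≠ 0 := by
    rintro rfl
    simp at he
  have heval : @Continuous _ _ τ _ (fun T : E →L[ℂ] E => T e) :=
    (continuous_eval_const (F := C(E, E)) e).comp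
      (continuous_induced_dom (f := fun T : E →L[ℂ] E => (⟨⇑T, T.continuous⟩ : C(E, E))))
  have hW := (heval.comp hcont).continuousAt.preimage_mem_nhds
    (x := ((0, 0) : (E →L[ℂ] E) × (E →L[ℂ] E))) (t := ball 0 1) (by
      simpa using ball_mem_nhds (0 : E) one_pos)
  rw [@nhds_prod_eq _ _ τ τ, mem_prod_iff] at hW
  obtain ⟨U₁, hU₁, U₂, hU₂, hsub⟩ := hW
  obtain ⟨K₁, ε₁, hK₁, hε₁, h₁⟩ := exists_compact_of_mem_nhds_zero_tau0 hU₁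
  obtain ⟨K₂, ε₂, hK₂, hε₂, h₂⟩ := exists_compact_of_mem_nhds_zero_tau0 hU₂
  obtain ⟨φ, hφ⟩ := SeparatingDual.exists_eq_one (R := ℂ) he0
  obtain ⟨M, hM0, hM⟩ := (hK₂.image φ.continuous).isBounded.exists_pos_norm_le
  -- `c` makes `φ ⊗ (c • y)` smaller than `ε₂` on `K₂` for every `y` in the unit ball.
  obtain ⟨c, hc, hcM⟩ : ∃ c : ℝ, 0 < c ∧ M * c < ε₂ :=
    ⟨ε₂ / (2 * M), by positivity, by field_simp; linarith⟩
  obtain ⟨ψ, y, hy, hψy, hψ⟩ :=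
    exists_functional_small_on_compact hinf hK₁ (δ := ε₁ * c / 2) (by positivity)
  have hT : ψ.smulRight ((c : ℂ)⁻¹ • e) ∈ U₁ := by
    refine h₁ _ fun x hx => ?_
    have h := hψ x hx
    have hn : ‖ψ.smulRight ((c : ℂ)⁻¹ • e) x‖ = ‖ψ x‖ / c := by
      simp [norm_smul, he, abs_of_pos hc, div_eq_mul_inv]
    rw [hn, div_lt_iff₀ hc]
    nlinarith [mul_pos hε₁ hc]
  have hS : φ.smulRight ((c : ℂ) • y) ∈ U₂ := by
    refine h₂ _ fun x hx => ?_
    have h := hM _ (mem_image_of_mem φ hx)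
    have hn : ‖φ.smulRight ((c : ℂ) • y) x‖ = ‖φ x‖ * (c * ‖y‖) := by
      simp [norm_smul, abs_of_pos hc]
    rw [hn]
    refine lt_of_le_of_lt (mul_le_mul h ?_ (by positivity) hM0.le) hcM
    exact mul_le_of_le_one_right hc.le hy
  have hlt := hsub (mk_mem_prod hT hS)
  have hc' : (c : ℂ) ≠ 0 := by exact_mod_cast hc.ne'
  have heq : (ψ.smulRight ((c : ℂ)⁻¹ • e)) ((φ.smulRight ((c : ℂ) • y)) e) = e := by
    simp only [ContinuousLinearMap.smulRight_apply, hφ, map_smul, hψy, smul_smul, one_mul,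
      mul_inv_cancel₀ hc', one_smul]
  have hlt' : ‖(ψ.smulRight ((c : ℂ)⁻¹ • e)) ((φ.smulRight ((c : ℂ) • y)) e)‖ < 1 :=
    mem_ball_zero_iff.1 hlt
  rw [heq, he] at hlt'
  exact lt_irrefl _ hlt'
end

section
/- Let E be a complex Banach space and U ⊆ E a balanced open set. Every holomorphic map f : U → E that is bounded on every U-bounded set is uniformly continuous on every U-bounded set. -/
/-!
If the balls of radius `ρ` around the points of `B` lie in `U`, the open `ρ / 2`-thickening `T` of
`B` is again `U`-bounded, so `f '' T` has finite diameter, at most `C` say. For `y ∈ B`, the map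
`f` sends `ball y (ρ / 2) ⊆ T` into `closedBall (f y) C`, and the Schwarz lemma gives
`dist (f x) (f y) ≤ C / (ρ / 2) * dist x y` whenever `dist x y < ρ / 2`. This Lipschitz constant
does not depend on `y`.
-/

open Filter Metric Set Bornology

/-- A set `B` is `U`-bounded if it is a bounded subset of `U` with positive distance
to the boundary of `U` (equivalently, some uniform thickening of `B` stays inside `U`). -/
def UBounded {E : Type*} [NormedAddCommGroup E] (U B : Set E) : Prop :=
  IsBounded B ∧ B ⊆ U ∧ ∃ ρ > (0 : ℝ), ∀ x ∈ B, ball x ρ ⊆ U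

/-- The positive distance to the complement of `U` lets a `U`-bounded set be fattened within the
class of `U`-bounded sets. -/
theorem UBounded.exists_thickening {E : Type*} [NormedAddCommGroup E] {U B : Set E}
    (hB : UBounded U B) : ∃ r > (0 : ℝ), UBounded U (thickening r B) := by
  obtain ⟨hbd, -, ρ, hρ, hball⟩ := hB
  refine ⟨ρ / 2, half_pos hρ, hbd.thickening, fun x hx => ?_, ρ / 2, half_pos hρ,
    fun x hx z hz => ?_⟩
  · obtain ⟨y, hy, hxy⟩ := mem_thickening_iff.1 hx
    exact hball y hy (mem_ball.2 (by linarith))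
  · obtain ⟨y, hy, hxy⟩ := mem_thickening_iff.1 hx
    refine hball y hy (mem_ball.2 ?_)
    linarith [dist_triangle z x y, mem_ball.1 hz]

/-- **Holomorphic maps of bounded type are uniformly continuous on `U`-bounded sets.**
Let `U` be a balanced open subset of a complex Banach space `E`.  Every holomorphic map
`f : U → E` which is bounded on every `U`-bounded set is uniformly continuous on every
`U`-bounded set. -/
theorem uniformContinuousOn_of_bounded_type
    {E : Type*} [NormedAddCommGroup E] [NormedSpace ℂ E] [CompleteSpace E]
    {U : Set E} (hUopen : IsOpen U) (hUbal : Balanced ℂ U)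
    (f : E → E) (hf : DifferentiableOn ℂ f U)
    (hfb : ∀ B : Set E, UBounded U B → IsBounded (f '' B)) :
    ∀ B : Set E, UBounded U B → UniformContinuousOn f B := by
  intro B hB
  obtain ⟨r, hr, hT⟩ := hB.exists_thickening
  obtain ⟨C, hC⟩ := Metric.isBounded_iff.1 (hfb _ hT)
  have key : ∀ x ∈ B, ∀ y ∈ B, dist x y < r → dist (f x) (f y) ≤ C / r * dist x y := by
    intro x _ y hy hxy
    have hsub : ball y r ⊆ thickening r B := ball_subset_thickening hy r
    exact Complex.dist_le_div_mul_dist_of_mapsTo_ball (hf.mono (hsub.trans hT.2.1))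
      (fun z hz => mem_closedBall.2 (hC (mem_image_of_mem f (hsub hz))
        (mem_image_of_mem f (hsub (mem_ball_self hr))))) (mem_ball.2 hxy)
  -- `|C / r| + 1` avoids splitting off the case where the Lipschitz constant vanishes.
  have hK : 0 < |C / r| + 1 := by positivity
  refine Metric.uniformContinuousOn_iff.2 fun ε hε =>
    ⟨min r (ε / (|C / r| + 1)), lt_min hr (div_pos hε hK), fun x hx y hy hxy => ?_⟩
  calc dist (f x) (f y) ≤ C / r * dist x y := key x hx y hy (hxy.trans_le (min_le_left _ _))
    _ ≤ (|C / r| + 1) * dist x y := by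
        gcongr
        linarith [le_abs_self (C / r)]
    _ < ε := by
        rw [mul_comm]
        exact (lt_div_iff₀ hK).1 (hxy.trans_le (min_le_right _ _))
end

section
/- Let E be a complex Banach space and let I be an ideal in H_b(E,E). Then I_L := {df(0) : f ∈ I}, the set of Fréchet derivatives at 0 of members of I, is an ideal in L(E): it is a linear subspace of the continuous linear operators on E, and T ∘ A ∘ S ∈ I_L whenever A ∈ I_L and T, S ∈ L(E). Moreover, I_L = {df(x) : f ∈ I, x ∈ E}. -/
/-!
Linearity of `I_L` is linearity of `f ↦ df(0)`. Continuous linear maps and translations belong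
to `H_b(E,E)`, so both may be composed with members of `I`. By the chain rule and `S 0 = 0`,
`d(T ∘ f ∘ S)(0) = T ∘ df(0) ∘ S`, which gives stability under composition with operators; and
the derivative of `f` at `x` is the derivative at `0` of the translate `y ↦ f (y + x)`, which
gives `{df(x)} = {df(0)}`.
-/

open Filter Metric Set Bornology

variable {E : Type*} [NormedAddCommGroup E] [NormedSpace ℂ E]

/-- `f` belongs to `H_b(E,E)`: `f` is entire and bounded on bounded sets. -/
def MemHb (f : E → E) : Prop :=
  Differentiable ℂ f ∧ ∀ B : Set E, IsBounded B → IsBounded (f '' B)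

/-- `I` is an ideal in `H_b(E,E)`: a linear subspace of `H_b(E,E)` stable under left and
right composition with members of `H_b(E,E)`. -/
def IsHbIdeal (I : Set (E → E)) : Prop :=
  (∀ f ∈ I, MemHb f) ∧ (0 : E → E) ∈ I ∧
  (∀ f ∈ I, ∀ g ∈ I, f + g ∈ I) ∧ (∀ c : ℂ, ∀ f ∈ I, c • f ∈ I) ∧
  (∀ f g h : E → E, MemHb f → MemHb h → g ∈ I → f ∘ g ∘ h ∈ I)

lemma memHb_continuousLinearMap (T : E →L[ℂ] E) : MemHb (T : E → E) :=
  ⟨T.differentiable, fun _ hB => T.lipschitz.isBounded_image hB⟩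

lemma memHb_add_const (x : E) : MemHb (fun y : E => y + x) :=
  ⟨differentiable_id.add_const x,
    fun _ hB => (LipschitzWith.id.add (LipschitzWith.const x)).isBounded_image hB⟩

/-- **Derivatives of an ideal in `H_b(E,E)` form an operator ideal.**
If `I` is an ideal in `H_b(E,E)`, then `I_L := {df(0) : f ∈ I}` is an ideal in `L(E)`
(a linear subspace stable under left and right composition with bounded operators), and
moreover `I_L = {df(x) : f ∈ I, x ∈ E}`. -/
theorem derivatives_of_ideal_form_operator_ideal [CompleteSpace E]
    (I : Set (E → E)) (hI : IsHbIdeal I) :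
    ((0 : E →L[ℂ] E) ∈ {T : E →L[ℂ] E | ∃ f ∈ I, fderiv ℂ f 0 = T}) ∧
    (∀ A ∈ {T : E →L[ℂ] E | ∃ f ∈ I, fderiv ℂ f 0 = T},
     ∀ B ∈ {T : E →L[ℂ] E | ∃ f ∈ I, fderiv ℂ f 0 = T},
      A + B ∈ {T : E →L[ℂ] E | ∃ f ∈ I, fderiv ℂ f 0 = T}) ∧
    (∀ c : ℂ, ∀ A ∈ {T : E →L[ℂ] E | ∃ f ∈ I, fderiv ℂ f 0 = T},
      c • A ∈ {T : E →L[ℂ] E | ∃ f ∈ I, fderiv ℂ f 0 = T}) ∧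
    (∀ T S : E →L[ℂ] E, ∀ A ∈ {A : E →L[ℂ] E | ∃ f ∈ I, fderiv ℂ f 0 = A},
      T.comp (A.comp S) ∈ {A : E →L[ℂ] E | ∃ f ∈ I, fderiv ℂ f 0 = A}) ∧
    ({T : E →L[ℂ] E | ∃ f ∈ I, fderiv ℂ f 0 = T} =
      {T : E →L[ℂ] E | ∃ f ∈ I, ∃ x : E, fderiv ℂ f x = T}) := by
  obtain ⟨hmem, hzero, hadd, hsmul, hcomp⟩ := hI
  have hd : ∀ f ∈ I, ∀ x, DifferentiableAt ℂ f x := fun f hf x => (hmem f hf).1 x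
  refine ⟨⟨0, hzero, by simp⟩, ?_, ?_, ?_, ?_⟩
  · rintro _ ⟨f, hf, rfl⟩ _ ⟨g, hg, rfl⟩
    exact ⟨f + g, hadd f hf g hg, fderiv_add (hd f hf 0) (hd g hg 0)⟩
  · rintro c _ ⟨f, hf, rfl⟩
    exact ⟨c • f, hsmul c f hf, fderiv_const_smul (hd f hf 0) c⟩
  · rintro T S _ ⟨f, hf, rfl⟩
    refine ⟨T ∘ f ∘ S, hcomp T f S (memHb_continuousLinearMap T) (memHb_continuousLinearMap S) hf,
      HasFDerivAt.fderiv ?_⟩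
    have hfS : HasFDerivAt f (fderiv ℂ f 0) (S 0) := by
      rw [map_zero]
      exact (hd f hf 0).hasFDerivAt
    exact T.hasFDerivAt.comp 0 (hfS.comp 0 S.hasFDerivAt)
  · ext A
    constructor
    · rintro ⟨f, hf, rfl⟩
      exact ⟨f, hf, 0, rfl⟩
    · rintro ⟨f, hf, x, rfl⟩
      refine ⟨id ∘ f ∘ (fun y => y + x), hcomp id f _
        (memHb_continuousLinearMap (ContinuousLinearMap.id ℂ E)) (memHb_add_const x) hf, ?_⟩
      have h : fderiv ℂ (fun y => f (y + x)) 0 = fderiv ℂ f (0 + x) := fderiv_comp_add_right x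
      rwa [zero_add] at h
end

section
/- Let E be a complex Banach space and let J be a non-trivial closed ideal in L(E), i.e., a norm-closed linear subspace with {0} ⊊ J ⊊ L(E) such that T ∘ A ∘ S ∈ J whenever A ∈ J and T, S ∈ L(E). Then [J] := {f ∈ H_b(E,E) : df(x) ∈ J for all x ∈ E} is a proper ideal in H_b(E,E) containing J, and it is sequentially closed for the topology of uniform convergence on bounded subsets of E. -/
/-!
Everything but closedness is linearity of the derivative and the chain rule
`d(f ∘ g ∘ h)(x) = df(g(h x)) ∘ dg(h x) ∘ dh(x)`; the map witnessing properness is any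
operator `T ∉ J`, which is its own derivative.

For closedness, Cauchy's inequality on complex lines (`norm_fderiv_le_of_closedBall`) bounds
`‖d(fₙ - g)(x)‖` by `sup ‖fₙ - g‖` over the unit ball about `x`. So uniform convergence on
bounded sets forces `dfₙ(x) → dg(x)` in operator norm, and `J` is norm-closed.
-/

open Filter Metric Set Bornology

variable {E : Type*} [NormedAddCommGroup E] [NormedSpace ℂ E]

/-- Given a set `J` of operators, `[J]` is the set of maps in `H_b(E,E)` all of whose
derivatives belong to `J`. -/
def DerivIdeal (J : Set (E →L[ℂ] E)) : Set (E → E) :=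
  {f : E → E | MemHb f ∧ ∀ x : E, fderiv ℂ f x ∈ J}

/-- Cauchy's inequality for the first derivative of an entire map. -/
lemma norm_fderiv_le_of_closedBall [CompleteSpace E] {u : E → E} (hu : Differentiable ℂ u)
    {x : E} {C : ℝ} (hC : 0 ≤ C) (hb : ∀ z ∈ closedBall x 1, ‖u z‖ ≤ C) :
    ‖fderiv ℂ u x‖ ≤ C := by
  refine ContinuousLinearMap.opNorm_le_bound _ hC fun y => ?_
  rcases eq_or_ne y 0 with rfl | hy
  · simp
  have hy' : 0 < ‖y‖ := norm_pos_iff.2 hy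
  have hline : HasDerivAt (fun t : ℂ => x + t • y) y 0 := by
    simpa using ((hasDerivAt_id (0 : ℂ)).smul_const y).const_add x
  have hd : HasDerivAt (fun t : ℂ => u (x + t • y)) (fderiv ℂ u x y) 0 := by
    have h : HasFDerivAt u (fderiv ℂ u x) (x + (0 : ℂ) • y) := by
      simpa using (hu x).hasFDerivAt
    exact h.comp_hasDerivAt 0 hline
  have hdiff : Differentiable ℂ (fun t : ℂ => u (x + t • y)) := by fun_prop
  -- The disc of radius `‖y‖⁻¹` in the line `x + ℂ y` lies in the unit ball about `x`.
  have key := Complex.norm_deriv_le_of_forall_mem_sphere_norm_le (c := 0) (R := ‖y‖⁻¹) (C := C)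
    (inv_pos.2 hy') hdiff.diffContOnCl (fun t ht => hb _ (by
      have ht' : ‖t‖ = ‖y‖⁻¹ := by simpa using ht
      simp [norm_smul, ht', hy'.ne']))
  rw [hd.deriv] at key
  simpa using key


/-- **`[J]` is a proper closed ideal in `H_b(E,E)` containing `J`.**
If `J` is a non-trivial closed ideal in `L(E)`, then
`[J] = {f ∈ H_b(E,E) : df(x) ∈ J for all x}` is a proper ideal in `H_b(E,E)` containing
`J`, which is sequentially closed for the topology of uniform convergence on bounded
subsets of `E`. -/
theorem derivIdeal_proper_closed_ideal [CompleteSpace E]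
    (J : Set (E →L[ℂ] E)) (hJclosed : IsClosed J)
    (hJ0 : (0 : E →L[ℂ] E) ∈ J)
    (hJadd : ∀ A ∈ J, ∀ B ∈ J, A + B ∈ J)
    (hJsmul : ∀ c : ℂ, ∀ A ∈ J, c • A ∈ J)
    (hJcomp : ∀ T S : E →L[ℂ] E, ∀ A ∈ J, T.comp (A.comp S) ∈ J)
    (hJne : ∃ A ∈ J, A ≠ 0) (hJproper : ∃ T : E →L[ℂ] E, T ∉ J) :
    -- `[J]` is a linear subspace of `H_b(E,E)` …
    ((∀ f ∈ DerivIdeal J, MemHb f) ∧ (0 : E → E) ∈ DerivIdeal J ∧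
      (∀ f ∈ DerivIdeal J, ∀ g ∈ DerivIdeal J, f + g ∈ DerivIdeal J) ∧
      (∀ c : ℂ, ∀ f ∈ DerivIdeal J, c • f ∈ DerivIdeal J)) ∧
    -- … stable under composition with members of `H_b(E,E)` …
    (∀ f g h : E → E, MemHb f → MemHb h → g ∈ DerivIdeal J → f ∘ g ∘ h ∈ DerivIdeal J) ∧
    -- … proper …
    (∃ f : E → E, MemHb f ∧ f ∉ DerivIdeal J) ∧
    -- … containing `J` …
    (∀ A ∈ J, ⇑A ∈ DerivIdeal J) ∧
    -- … and sequentially `τ_b`-closed.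
    (∀ (fseq : ℕ → E → E) (g : E → E), (∀ n, fseq n ∈ DerivIdeal J) → MemHb g →
      (∀ B : Set E, IsBounded B → TendstoUniformlyOn fseq g atTop B) →
      g ∈ DerivIdeal J) := by
  refine ⟨⟨fun f hf => hf.1, ?_, ?_, ?_⟩, ?_, ?_, ?_, ?_⟩
  · refine ⟨⟨differentiable_const 0, fun B _ => ?_⟩, fun x => ?_⟩
    · exact isBounded_singleton.subset (t := {(0 : E)}) (by rintro _ ⟨x, _, rfl⟩; rfl)
    · rw [fderiv_zero]
      exact hJ0
  · rintro f ⟨⟨hf, hfb⟩, hfJ⟩ g ⟨⟨hg, hgb⟩, hgJ⟩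
    refine ⟨⟨hf.add hg, fun B hB => ?_⟩, fun x => ?_⟩
    · refine ((hfb B hB).add (hgb B hB)).subset ?_
      rintro _ ⟨x, hx, rfl⟩
      exact Set.add_mem_add (mem_image_of_mem f hx) (mem_image_of_mem g hx)
    · rw [fderiv_add (hf x) (hg x)]
      exact hJadd _ (hfJ x) _ (hgJ x)
  · rintro c f ⟨⟨hf, hfb⟩, hfJ⟩
    refine ⟨⟨hf.const_smul c, fun B hB => ?_⟩, fun x => ?_⟩
    · refine ((hfb B hB).smul₀ c).subset ?_
      rintro _ ⟨x, hx, rfl⟩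
      exact Set.smul_mem_smul_set (mem_image_of_mem f hx)
    · rw [fderiv_const_smul (hf x)]
      exact hJsmul c _ (hfJ x)
  · rintro f g h ⟨hf, hfb⟩ ⟨hh, hhb⟩ ⟨⟨hg, hgb⟩, hgJ⟩
    refine ⟨⟨hf.comp (hg.comp hh), fun B hB => ?_⟩, fun x => ?_⟩
    · rw [image_comp, image_comp]
      exact hfb _ (hgb _ (hhb _ hB))
    · rw [fderiv_comp x (hf _) ((hg.comp hh) x), fderiv_comp x (hg _) (hh x)]
      exact hJcomp _ _ _ (hgJ _)
  · obtain ⟨T, hT⟩ := hJproper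
    refine ⟨T, ⟨T.differentiable, fun B hB => T.lipschitz.isBounded_image hB⟩, fun h => hT ?_⟩
    simpa using h.2 0
  · intro A hA
    refine ⟨⟨A.differentiable, fun B hB => A.lipschitz.isBounded_image hB⟩, fun x => ?_⟩
    rwa [A.fderiv]
  · intro fseq g hf hg hconv
    refine ⟨hg, fun x => ?_⟩
    refine hJclosed.mem_of_tendsto (f := fun n => fderiv ℂ (fseq n) x) (b := atTop) ?_
      (Eventually.of_forall fun n => (hf n).2 x)
    rw [Metric.tendsto_nhds]
    intro ε hε
    filter_upwards [Metric.tendstoUniformlyOn_iff.1 (hconv (closedBall x 1) isBounded_closedBall)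
      (ε / 2) (half_pos hε)] with n hn
    rw [dist_eq_norm, ← fderiv_sub ((hf n).1.1 x) (hg.1 x)]
    refine lt_of_le_of_lt (norm_fderiv_le_of_closedBall ((hf n).1.1.sub hg.1) (half_pos hε).le
      fun z hz => ?_) (half_lt_self hε)
    rw [Pi.sub_apply, ← dist_eq_norm, dist_comm]
    exact (hn z hz).le
end

section
/- Let E be a complex Banach space and let f : E → E be an entire map, bounded on bounded sets, that maps every bounded subset of E onto a relatively compact set. Then for every x ∈ E, the Fréchet derivative df(x) is a compact linear operator on E. (Hence H_k(E,E) ⊆ [K(E)].) -/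
open Filter Metric Set Bornology

/-! Fréchet differentiability at `x` is uniform over directions: for small `c > 0` the operator
`df(x)` is uniformly close on the unit ball to the difference quotient
`u ↦ c⁻¹ • (f (x + c • u) - f x)`.  The image of the unit ball under this quotient is an affine
copy of a set of values of `f` on a bounded set, hence totally bounded.  So the image of the ball
under `df(x)` has a finite `ε`-net for every `ε`, and completeness turns total boundedness into
relative compactness. -/

/-- **Derivatives of compact holomorphic maps are compact operators.**
Let `f : E → E` be an entire map on a complex Banach space, bounded on bounded sets, which
maps every bounded set onto a relatively compact set.  Then for every `x ∈ E` the Fréchet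
derivative `df(x)` is a compact operator, i.e. it maps the unit ball onto a relatively
compact set.  (Hence `H_k(E,E) ⊆ [K(E)]`.) -/
theorem fderiv_compact_of_compact_holomorphic
    {E : Type*} [NormedAddCommGroup E] [NormedSpace ℂ E] [CompleteSpace E]
    (f : E → E) (hdiff : Differentiable ℂ f)
    (hb : ∀ B : Set E, IsBounded B → IsBounded (f '' B))
    (hk : ∀ B : Set E, IsBounded B → IsCompact (closure (f '' B))) :
    ∀ x : E, IsCompact (closure (fderiv ℂ f x '' ball (0 : E) 1)) := by
  intro x
  refine TotallyBounded.isCompact_of_isClosed ?_ isClosed_closure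
  refine TotallyBounded.closure ?_
  rw [Metric.totallyBounded_iff]
  intro ε hε
  have ho := (hasFDerivAt_iff_isLittleO_nhds_zero.1 (hdiff x).hasFDerivAt).def (half_pos hε)
  obtain ⟨δ, hδ, hball⟩ := Metric.eventually_nhds_iff.1 ho
  obtain ⟨c, hc, hcδ⟩ := exists_between hδ
  have htb : TotallyBounded (f '' ball x δ) :=
    (hk _ isBounded_ball).totallyBounded.subset subset_closure
  obtain ⟨t, ht, hcov⟩ := Metric.totallyBounded_iff.1 htb (c * (ε / 2)) (by positivity)
  -- A `c * (ε / 2)`-net for the values of `f` becomes, under `y ↦ c⁻¹ • (y - f x)`, an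
  -- `ε / 2`-net for the difference quotients, hence an `ε`-net for the derivative.
  refine ⟨(fun y => c⁻¹ • (y - f x)) '' t, ht.image _, ?_⟩
  rintro _ ⟨u, hu, rfl⟩
  rw [mem_ball_zero_iff] at hu
  have hcu : ‖c • u‖ ≤ c := by
    rw [norm_smul, Real.norm_of_nonneg hc.le]
    exact mul_le_of_le_one_right hc.le hu.le
  have happrox : ‖f (x + c • u) - f x - fderiv ℂ f x (c • u)‖ ≤ ε / 2 * c :=
    (hball (by simpa using hcu.trans_lt hcδ)).trans
      (mul_le_mul_of_nonneg_left hcu (half_pos hε).le)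
  have hmem : f (x + c • u) ∈ f '' ball x δ :=
    mem_image_of_mem f (by simpa [mem_ball, dist_eq_norm] using hcu.trans_lt hcδ)
  obtain ⟨y, hy, hdist⟩ := mem_iUnion₂.1 (hcov hmem)
  rw [mem_ball, dist_eq_norm] at hdist
  refine mem_iUnion₂.2 ⟨_, mem_image_of_mem _ hy, ?_⟩
  have hL : fderiv ℂ f x (c • u) = c • fderiv ℂ f x u :=
    ((fderiv ℂ f x).restrictScalars ℝ).map_smul c u
  have hkey : fderiv ℂ f x u - c⁻¹ • (y - f x)
      = c⁻¹ • ((f (x + c • u) - y) - (f (x + c • u) - f x - fderiv ℂ f x (c • u))) := by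
    have hu' : fderiv ℂ f x u = c⁻¹ • fderiv ℂ f x (c • u) := by
      rw [hL, inv_smul_smul₀ hc.ne']
    rw [hu', ← smul_sub]
    congr 1
    abel
  rw [mem_ball, dist_eq_norm, hkey, norm_smul, norm_inv, Real.norm_of_nonneg hc.le,
    inv_mul_lt_iff₀ hc]
  have htri := norm_sub_le (f (x + c • u) - y) (f (x + c • u) - f x - fderiv ℂ f x (c • u))
  linarith
end

section
/- Let c₀ be the Banach space of complex sequences converging to 0 with the supremum norm, and define P : c₀ → c₀ by P((x_n)_n) = (x_n²)_n. Then: (i) P is entire (Fréchet differentiable over ℂ at every point) and bounded on bounded sets; (ii) for every x = (x_n)_n ∈ c₀, the Fréchet derivative dP(x), which is the operator y = (y_n)_n ↦ (2 x_n y_n)_n, is a compact linear operator on c₀; (iii) P does not map the closed unit ball of c₀ onto a relatively compact set (indeed P(e_n) = e_n for every canonical basis vector e_n). In particular P ∈ [K(c₀)] but P ∉ H_k(c₀,c₀). -/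
/-!
`P x = x * x` is the diagonal of the bounded bilinear multiplication `B` of the Banach algebra `c₀`,
so it is entire with derivative `y ↦ x * y + y * x`, and `‖P x‖ ≤ ‖x‖ ^ 2`.

Multiplication by `e_i` has rank one, hence is compact. The truncations `∑_{i < N} x_i e_i`
converge to `x` in `c₀`, and `x ↦ B x` is norm continuous, so multiplication by any `x ∈ c₀`
is an operator-norm limit of finite-rank operators and therefore compact.

On the other hand `P e_n = e_n`, and the `e_n` form a 1-separated sequence in the closed unit ball,
so the image of that ball under `P` is not relatively compact.
-/

open Filter Metric Set Bornology ZeroAtInfty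

/-- The canonical basis vector `e n` of `c₀`, the space of complex sequences tending
to `0` with the supremum norm (realized as `C₀(ℕ, ℂ)`). -/
noncomputable def eVec (n : ℕ) : C₀(ℕ, ℂ) :=
  ⟨⟨fun k => if k = n then 1 else 0, continuous_of_discreteTopology⟩, by
    have h : (fun k : ℕ => if k = n then (1 : ℂ) else 0) =ᶠ[atTop] fun _ => (0 : ℂ) := by
      filter_upwards [eventually_gt_atTop n] with k hk
      simp [Nat.ne_of_gt hk]
    simpa [cocompact_eq_atTop] using (tendsto_const_nhds.congr' h.symm)⟩

theorem norm_coord_le (f : C₀(ℕ, ℂ)) (n : ℕ) : ‖f n‖ ≤ ‖f‖ := by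
  simpa using f.toBCF.norm_coe_le_norm n

theorem norm_le_of_coord_le {f : C₀(ℕ, ℂ)} {C : ℝ} (hC : 0 ≤ C) (h : ∀ n, ‖f n‖ ≤ C) :
    ‖f‖ ≤ C := by
  rw [← ZeroAtInftyContinuousMap.norm_toBCF_eq_norm]
  exact (BoundedContinuousFunction.norm_le hC).2 h

theorem eVec_apply (n k : ℕ) : eVec n k = if k = n then 1 else 0 := rfl

theorem eVec_mul_self (n : ℕ) : eVec n * eVec n = eVec n := by
  ext k
  simp [eVec_apply]

theorem norm_eVec_le (n : ℕ) : ‖eVec n‖ ≤ 1 := by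
  refine norm_le_of_coord_le zero_le_one fun k => ?_
  rw [eVec_apply]
  split_ifs <;> simp

theorem one_le_dist_eVec {m n : ℕ} (h : m ≠ n) : 1 ≤ dist (eVec m) (eVec n) := by
  rw [dist_eq_norm]
  simpa [eVec_apply, h] using norm_coord_le (eVec m - eVec n) m

/-- The coordinate functional `x ↦ x n` on `c₀`. -/
noncomputable def coordCLM (n : ℕ) : C₀(ℕ, ℂ) →L[ℂ] ℂ :=
  LinearMap.mkContinuous
    { toFun := fun x => x n
      map_add' := fun _ _ => rfl
      map_smul' := fun _ _ => rfl } 1 fun x => by simpa using norm_coord_le x n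

/-- The multiplication operator of `e_n` has rank one, as it factors through `coordCLM n`. -/
theorem isCompactOperator_mul_eVec (n : ℕ) :
    IsCompactOperator (ContinuousLinearMap.mul ℂ C₀(ℕ, ℂ) (eVec n)) := by
  have h : ContinuousLinearMap.mul ℂ C₀(ℕ, ℂ) (eVec n) =
      (ContinuousLinearMap.toSpanSingleton ℂ (eVec n)).comp (coordCLM n) := by
    ext y k
    by_cases hk : k = n
    · subst hk
      simp [eVec_apply, coordCLM]
    · simp [eVec_apply, coordCLM, hk]
  rw [h]
  exact (isCompactOperator_of_locallyCompactSpace_rng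
    (ContinuousLinearMap.toSpanSingleton ℂ (eVec n))).comp_clm (coordCLM n)

theorem sum_eVec_apply (x : C₀(ℕ, ℂ)) (N k : ℕ) :
    (∑ i ∈ Finset.range N, x i • eVec i) k = if k < N then x k else 0 := by
  change coordCLM k (∑ i ∈ Finset.range N, x i • eVec i) = _
  rw [map_sum]
  simp [coordCLM, eVec_apply]

theorem tendsto_sum_eVec (x : C₀(ℕ, ℂ)) :
    Tendsto (fun N => ∑ i ∈ Finset.range N, x i • eVec i) atTop (nhds x) := by
  have hx : Tendsto x atTop (nhds 0) := by
    simpa [cocompact_eq_atTop] using x.zero_at_infty'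
  rw [Metric.tendsto_atTop] at hx ⊢
  intro ε hε
  obtain ⟨N, hN⟩ := hx (ε / 2) (half_pos hε)
  refine ⟨N, fun M hM => ?_⟩
  rw [dist_eq_norm]
  refine (norm_le_of_coord_le (half_pos hε).le fun k => ?_).trans_lt (half_lt_self hε)
  rw [ZeroAtInftyContinuousMap.sub_apply, sum_eVec_apply]
  split_ifs with hk
  · simpa using (half_pos hε).le
  · simpa using (hN k (by omega)).le

theorem isCompactOperator_mul (x : C₀(ℕ, ℂ)) :
    IsCompactOperator (ContinuousLinearMap.mul ℂ C₀(ℕ, ℂ) x) := by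
  refine isCompactOperator_of_tendsto
    (((ContinuousLinearMap.mul ℂ C₀(ℕ, ℂ)).continuous.tendsto x).comp (tendsto_sum_eVec x))
    (Eventually.of_forall fun N => ?_)
  change ContinuousLinearMap.mul ℂ C₀(ℕ, ℂ) (∑ i ∈ Finset.range N, x i • eVec i) ∈
    compactOperator (RingHom.id ℂ) C₀(ℕ, ℂ) C₀(ℕ, ℂ)
  rw [map_sum]
  refine Submodule.sum_mem _ fun i _ => ?_
  rw [map_smul]
  exact Submodule.smul_mem _ _ (isCompactOperator_mul_eVec i)

theorem hasFDerivAt_sq (x : C₀(ℕ, ℂ)) :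
    HasFDerivAt (fun x : C₀(ℕ, ℂ) => x * x)
      ((2 : ℂ) • ContinuousLinearMap.mul ℂ C₀(ℕ, ℂ) x) x := by
  have h := (ContinuousLinearMap.mul ℂ C₀(ℕ, ℂ)).hasFDerivAt_of_bilinear
    (hasFDerivAt_id x) (hasFDerivAt_id x)
  refine h.congr_fderiv ?_
  ext y k
  simp
  ring

/-- **The squaring map on `c₀` lies in `[K(c₀)] \ H_k(c₀, c₀)`.**
Let `P : c₀ → c₀` be given by `P((x_n)_n) = (x_n²)_n`, i.e. `P x = x * x`.  Then:
(i) `P` is entire and bounded on bounded sets; (ii) for every `x ∈ c₀` the Fréchet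
derivative `dP(x)`, which is the operator `(y_n)_n ↦ (2 x_n y_n)_n`, is a compact
operator; (iii) `P` does not map the closed unit ball of `c₀` onto a relatively compact
set — indeed `P (e n) = e n` for every canonical basis vector. -/
theorem squaring_on_c0_in_KC0_not_Hk :
    (Differentiable ℂ (fun x : C₀(ℕ, ℂ) => x * x) ∧
      ∀ B : Set C₀(ℕ, ℂ), IsBounded B → IsBounded ((fun x => x * x) '' B)) ∧
    (∀ x : C₀(ℕ, ℂ), ∃ T : C₀(ℕ, ℂ) →L[ℂ] C₀(ℕ, ℂ),
      (∀ y : C₀(ℕ, ℂ), ∀ n : ℕ, T y n = 2 * x n * y n) ∧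
      HasFDerivAt (fun x : C₀(ℕ, ℂ) => x * x) T x ∧
      IsCompact (closure (⇑T '' closedBall (0 : C₀(ℕ, ℂ)) 1))) ∧
    (¬ IsCompact (closure ((fun x : C₀(ℕ, ℂ) => x * x) '' closedBall (0 : C₀(ℕ, ℂ)) 1)) ∧
      ∀ n : ℕ, eVec n * eVec n = eVec n) := by
  refine ⟨⟨fun x => (hasFDerivAt_sq x).differentiableAt, fun B hB => ?_⟩,
    fun x => ⟨(2 : ℂ) • ContinuousLinearMap.mul ℂ C₀(ℕ, ℂ) x, fun y n => ?_, hasFDerivAt_sq x, ?_⟩,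
    fun hc => ?_, eVec_mul_self⟩
  · obtain ⟨C, hC⟩ := hB.exists_norm_le
    refine isBounded_iff_forall_norm_le.2 ⟨C * C, ?_⟩
    rintro _ ⟨x, hx, rfl⟩
    exact (norm_mul_le x x).trans
      (mul_self_le_mul_self (norm_nonneg x) (hC x hx))
  · simp [mul_assoc]
  · have h2 : IsCompactOperator ((2 : ℂ) • ContinuousLinearMap.mul ℂ C₀(ℕ, ℂ) x) :=
      (isCompactOperator_mul x).smul (2 : ℂ)
    exact IsCompactOperator.isCompact_closure_image_closedBall
      (f := ((2 : ℂ) • ContinuousLinearMap.mul ℂ C₀(ℕ, ℂ) x).toLinearMap) h2 1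
  · have hmem : ∀ n, eVec n ∈
        closure ((fun x : C₀(ℕ, ℂ) => x * x) '' closedBall (0 : C₀(ℕ, ℂ)) 1) := fun n =>
      subset_closure ⟨eVec n, by simpa using norm_eVec_le n, eVec_mul_self n⟩
    obtain ⟨a, -, φ, hφ, hlim⟩ := hc.tendsto_subseq hmem
    obtain ⟨N, hN⟩ := Metric.cauchySeq_iff.1 hlim.cauchySeq 1 one_pos
    exact absurd (hN N le_rfl (N + 1) N.le_succ)
      (not_lt.2 (one_le_dist_eVec (hφ N.lt_succ_self).ne))
end

section
/- Let 𝔻 ⊆ ℂ be the open unit disc. There exist a holomorphic function f : 𝔻 → ℂ with sup_{z ∈ 𝔻} |f(z)| ≤ 1, a sequence (g_m) of holomorphic maps g_m : 𝔻 → 𝔻, and a holomorphic map g : 𝔻 → 𝔻, such that (g_m) converges to g uniformly on 𝔻 but (f ∘ g_m) does not converge to f ∘ g uniformly on 𝔻. (Hence the composition operation is not separately continuous on the unit ball of H^∞ with the supremum norm.) -/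
/-!
The witness is an imaginary power of `1 - z`, rescaled to have norm at most `1`: it oscillates
logarithmically at the boundary point `1`, and the exponent is chosen so that halving the distance
to `1` along the radius changes its sign (`oscPow_two_mul`), while its modulus is constant there
(`norm_oscPow_ofReal`). The contractions `z ↦ m / (m + 1) * z` converge uniformly to the identity
on the disc, yet the `m`-th one maps the point at distance `1 / (m + 2)` from `1` to the point at
distance `2 / (m + 2)`, so the composites stay a fixed distance apart.
-/

open Filter Metric Set

/-- The function `exp (-π a) * (1 - z) ^ (i a)` with `a = π / log 2`, using the principal branch.
The factor `exp (-π a)` makes it bounded by `1` because `arg > -π`. -/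
noncomputable def oscPow (z : ℂ) : ℂ :=
  Complex.exp (((Real.pi / Real.log 2 : ℝ) : ℂ) * (Complex.I * Complex.log (1 - z) - (Real.pi : ℂ)))

lemma norm_oscPow (z : ℂ) :
    ‖oscPow z‖ = Real.exp (Real.pi / Real.log 2 * (-(1 - z).arg - Real.pi)) := by
  rw [oscPow, Complex.norm_exp, Complex.re_ofReal_mul]
  simp [Complex.log_im]

lemma norm_oscPow_le_one (z : ℂ) : ‖oscPow z‖ ≤ 1 := by
  rw [norm_oscPow, Real.exp_le_one_iff]
  have h := Complex.neg_pi_lt_arg (1 - z)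
  have h2 : 0 ≤ Real.pi / Real.log 2 :=
    div_nonneg Real.pi_pos.le (Real.log_pos one_lt_two).le
  exact mul_nonpos_of_nonneg_of_nonpos h2 (by linarith)

lemma differentiableOn_oscPow : DifferentiableOn ℂ oscPow (ball (0 : ℂ) 1) := by
  intro z hz
  have hz' : ‖z‖ < 1 := by simpa using hz
  have hs : 1 - z ∈ Complex.slitPlane := by
    refine Or.inl ?_
    have := Complex.re_le_norm z
    simp only [Complex.sub_re, Complex.one_re]
    linarith
  unfold oscPow
  refine DifferentiableAt.differentiableWithinAt ?_
  have h1 : DifferentiableAt ℂ (fun z : ℂ => Complex.log (1 - z)) z :=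
    (differentiableAt_id.const_sub 1).clog hs
  exact (((h1.const_mul _).sub_const _).const_mul _).cexp

lemma norm_oscPow_ofReal {t : ℝ} (ht : 0 < t) :
    ‖oscPow (1 - (t : ℂ))‖ = Real.exp (Real.pi / Real.log 2 * (-Real.pi)) := by
  rw [norm_oscPow, sub_sub_cancel, Complex.arg_ofReal_of_nonneg ht.le]
  simp

lemma oscPow_two_mul {t : ℝ} (ht : 0 < t) :
    oscPow (1 - ((2 * t : ℝ) : ℂ)) = -oscPow (1 - (t : ℂ)) := by
  have hl : Real.log 2 ≠ 0 := (Real.log_pos one_lt_two).ne'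
  have hlc : (Real.log 2 : ℂ) ≠ 0 := by exact_mod_cast hl
  unfold oscPow
  rw [sub_sub_cancel, sub_sub_cancel, ← Complex.ofReal_log (by positivity),
    ← Complex.ofReal_log ht.le, Real.log_mul two_ne_zero ht.ne', ← Complex.exp_add_pi_mul_I]
  congr 1
  push_cast
  field_simp
  ring

/-- **Composition is not separately continuous on the unit ball of `H^∞`.**
There exist a holomorphic `f : 𝔻 → ℂ` with `sup_{𝔻} |f| ≤ 1`, a sequence `(g m)` of
holomorphic self-maps of the unit disc `𝔻`, and a holomorphic self-map `g` of `𝔻`, such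
that `g m → g` uniformly on `𝔻` while `f ∘ g m` does not converge to `f ∘ g` uniformly
on `𝔻`. -/
theorem composition_not_separately_continuous_Hinfty :
    ∃ (f : ℂ → ℂ) (G : ℕ → ℂ → ℂ) (g : ℂ → ℂ),
      DifferentiableOn ℂ f (ball (0 : ℂ) 1) ∧
      (∀ z ∈ ball (0 : ℂ) 1, ‖f z‖ ≤ 1) ∧
      (∀ m, DifferentiableOn ℂ (G m) (ball (0 : ℂ) 1) ∧
        MapsTo (G m) (ball (0 : ℂ) 1) (ball (0 : ℂ) 1)) ∧
      DifferentiableOn ℂ g (ball (0 : ℂ) 1) ∧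
      MapsTo g (ball (0 : ℂ) 1) (ball (0 : ℂ) 1) ∧
      TendstoUniformlyOn G g atTop (ball (0 : ℂ) 1) ∧
      ¬ TendstoUniformlyOn (fun m => f ∘ G m) (f ∘ g) atTop (ball (0 : ℂ) 1) := by
  refine ⟨oscPow, fun m z => ((m / (m + 1) : ℝ) : ℂ) * z, id, differentiableOn_oscPow,
    fun z _ => norm_oscPow_le_one z, fun m => ⟨by fun_prop, ?_⟩, differentiableOn_id,
    fun z hz => hz, ?_, ?_⟩
  · intro z hz
    have hz' : ‖z‖ < 1 := by simpa using hz
    have h0 : (0 : ℝ) ≤ m / (m + 1) := by positivity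
    have h1 : (m : ℝ) / (m + 1) ≤ 1 := by
      rw [div_le_one (by positivity)]
      linarith
    rw [mem_ball_zero_iff, norm_mul, Complex.norm_of_nonneg h0]
    exact (mul_le_of_le_one_left (norm_nonneg z) h1).trans_lt hz'
  · rw [Metric.tendstoUniformlyOn_iff]
    intro ε hε
    filter_upwards [(tendsto_one_div_add_atTop_nhds_zero_nat (𝕜 := ℝ)).eventually_lt_const hε]
      with m hm z hz
    have hz' : ‖z‖ < 1 := by simpa using hz
    have hm0 : (0 : ℝ) < (m : ℝ) + 1 := by positivity
    have e : id z - ((m / (m + 1) : ℝ) : ℂ) * z = ((1 / (m + 1) : ℝ) : ℂ) * z := by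
      have : (1 / (m + 1) : ℝ) = 1 - m / (m + 1) := by
        field_simp
        ring
      rw [this]
      push_cast
      simp only [id]
      ring
    have h0 : (0 : ℝ) ≤ 1 / (m + 1) := by positivity
    rw [dist_eq_norm, e, norm_mul, Complex.norm_of_nonneg h0]
    exact (mul_le_of_le_one_right h0 hz'.le).trans_lt hm
  · intro h
    rw [Metric.tendstoUniformlyOn_iff] at h
    obtain ⟨m, hm⟩ := (h _ (Real.exp_pos (Real.pi / Real.log 2 * (-Real.pi)))).exists
    have ht : (0 : ℝ) < 1 / (m + 2) := by positivity
    have ht1 : (1 : ℝ) / (m + 2) ≤ 1 := by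
      rw [div_le_one (by positivity)]
      linarith [(Nat.cast_nonneg m : (0 : ℝ) ≤ m)]
    -- The test point `1 - 1 / (m + 2)` is moved by the `m`-th contraction to `1 - 2 / (m + 2)`.
    have hmem : (1 - ((1 / (m + 2) : ℝ) : ℂ)) ∈ ball (0 : ℂ) 1 := by
      rw [mem_ball_zero_iff, ← Complex.ofReal_one, ← Complex.ofReal_sub,
        Complex.norm_of_nonneg (by linarith)]
      linarith
    have hG : ((m / (m + 1) : ℝ) : ℂ) * (1 - ((1 / (m + 2) : ℝ) : ℂ))
        = 1 - ((2 * (1 / (m + 2)) : ℝ) : ℂ) := by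
      have hr : (m / (m + 1) : ℝ) * (1 - 1 / (m + 2)) = 1 - 2 * (1 / (m + 2)) := by
        field_simp
        ring
      exact_mod_cast congrArg (fun x : ℝ => (x : ℂ)) hr
    have hd := hm _ hmem
    simp only [Function.comp_apply, id] at hd
    rw [hG, oscPow_two_mul ht, dist_eq_norm, sub_neg_eq_add, ← two_mul, norm_mul,
      norm_oscPow_ofReal ht, Complex.norm_ofNat] at hd
    linarith [Real.exp_pos (Real.pi / Real.log 2 * (-Real.pi))]
end
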